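/- There exists a universal constant C > 0 such that the following holds. Let G be a finite connected simple graph with m ≥ 1 edges and diameter d ≥ 1, and let w be a walk on G following the LFV-e policy. Then every edge of G has latency at most C·m·d under w: for every edge {a,b} of G and every time t ∈ ℕ there exists t' with t ≤ t' < t + C·m·d such that {w(t'),w(t'+1)} = {a,b}. -/

import Mathlib

open Classical in
/-- traversal count of an edge before time `t` -/
noncomputable def lfvCnt {V : Type} (w : ℕ → V) : ℕ → Sym2 V → ℕ
  | 0, _ => 0
  | t + 1, e => lfvCnt w t e + if s(w t, w (t + 1)) = e then 1 else 0

theorem lfvCnt_eq {V : Type} (w : ℕ → V) (t : ℕ) (e : Sym2 V) :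
    {t' : ℕ | t' < t ∧ s(w t', w (t' + 1)) = e}.ncard = lfvCnt w t e := by
  induction t with
  | zero => simp [lfvCnt]
  | succ t ih =>
    have hfin : {t' : ℕ | t' < t ∧ s(w t', w (t' + 1)) = e}.Finite :=
      (Set.finite_lt_nat t).subset (fun x hx => hx.1)
    rw [lfvCnt, ← ih]
    split_ifs with h
    · have : {t' : ℕ | t' < t + 1 ∧ s(w t', w (t' + 1)) = e}
          = insert t {t' : ℕ | t' < t ∧ s(w t', w (t' + 1)) = e} := by
        ext x
        simp only [Set.mem_setOf_eq, Set.mem_insert_iff]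
        constructor
        · rintro ⟨h1, h2⟩
          by_cases hx : x = t
          · exact Or.inl hx
          · exact Or.inr ⟨by omega, h2⟩
        · rintro (rfl | ⟨h1, h2⟩)
          · exact ⟨by omega, h⟩
          · exact ⟨by omega, h2⟩
      rw [this, Set.ncard_insert_of_notMem (by simp) hfin]
    · have : {t' : ℕ | t' < t + 1 ∧ s(w t', w (t' + 1)) = e}
          = {t' : ℕ | t' < t ∧ s(w t', w (t' + 1)) = e} := by
        ext x
        simp only [Set.mem_setOf_eq]
        constructor
        · rintro ⟨h1, h2⟩
          refine ⟨?_, h2⟩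
          by_contra hx
          obtain rfl : x = t := by omega
          exact h h2
        · rintro ⟨h1, h2⟩
          exact ⟨by omega, h2⟩
      rw [this]; rfl

open Classical in
/-- sum over the neighbours -/
noncomputable def lfvSum {V : Type} [Fintype V] (G : SimpleGraph V) (g : Sym2 V → ℕ) (v : V) : ℕ :=
  ∑ u : V, if G.Adj v u then g s(v, u) else 0

theorem lfvSum_congr {V : Type} [Fintype V] (G : SimpleGraph V) (g g' : Sym2 V → ℕ)
    (h : ∀ e, g e = g' e) (v : V) : lfvSum G g v = lfvSum G g' v := by
  rw [show g = g' from funext h]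

open Classical in
theorem lfvSum_update {V : Type} [Fintype V] (G : SimpleGraph V) (g g' : Sym2 V → ℕ) (a b : V)
    (hab : G.Adj a b)
    (h : ∀ e, g' e = g e + if s(a, b) = e then 1 else 0) (v : V) :
    lfvSum G g' v = lfvSum G g v + (if v = a then 1 else 0) + (if v = b then 1 else 0) := by
  have hne : a ≠ b := hab.ne
  have key : ∀ u, (if G.Adj v u then g' s(v, u) else 0)
      = (if G.Adj v u then g s(v, u) else 0) + (if v = a then (if u = b then 1 else 0) else 0)
        + (if v = b then (if u = a then 1 else 0) else 0) := by
    intro u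
    rw [h]
    by_cases hva : v = a
    · subst hva
      by_cases hub : u = b
      · subst hub; simp [hab, hne]
      · have : ¬ (s(v, b) = s(v, u)) := by
          rw [Sym2.eq_iff]; rintro (⟨_, h⟩ | ⟨h1, h2⟩)
          · exact hub h.symm
          · exact hne h2.symm
        simp [this, hub, hne]
    · by_cases hvb : v = b
      · subst hvb
        by_cases hua : u = a
        · subst hua; simp [hab.symm, hva, Sym2.eq_swap]
        · have : ¬ (s(a, v) = s(v, u)) := by
            rw [Sym2.eq_iff]; rintro (⟨h, _⟩ | ⟨h1, h2⟩)
            · exact hne h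
            · exact hua h1.symm
          simp [this, hua, hva]
      · have : ¬ (s(a, b) = s(v, u)) := by
          rw [Sym2.eq_iff]; rintro (⟨h, _⟩ | ⟨h1, h2⟩)
          · exact hva h.symm
          · exact hvb h2.symm
        simp [this, hva, hvb]
  unfold lfvSum
  rw [Finset.sum_congr rfl (fun u _ => key u), Finset.sum_add_distrib, Finset.sum_add_distrib]
  congr 1
  · congr 1
    split_ifs <;> simp
  · split_ifs <;> simp

theorem lfvSum_ne_zero {V : Type} [Fintype V] (G : SimpleGraph V) (g : Sym2 V → ℕ) (v : V) :
    lfvSum G g v ≠ 0 ↔ ∃ u, G.Adj v u ∧ g s(v, u) ≠ 0 := by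
  unfold lfvSum
  rw [Ne, Finset.sum_eq_zero_iff]
  simp

theorem le_lfvSum {V : Type} [Fintype V] (G : SimpleGraph V) (g : Sym2 V → ℕ) (v u : V)
    (h : G.Adj v u) : g s(v, u) ≤ lfvSum G g v := by
  classical
  unfold lfvSum
  have := Finset.single_le_sum (f := fun u => if G.Adj v u then g s(v, u) else 0)
    (fun i _ => Nat.zero_le _) (Finset.mem_univ u)
  simpa [h] using this

open Classical in
/-- The invariant: residual degrees `r` below an even threshold, excess `x` above it. -/
def lfvInv {V : Type} (r x : V → ℕ) (p : V) : Prop :=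
  (r p = 0 ∧ ∀ v, Even (r v) ∧ (r v ≠ 0 → x v = 0)) ∨
  (∃ o, r o ≠ 0 ∧ r p ≠ 0 ∧
    ∀ v, Even (r v + (if v = o then 1 else 0) + (if v = p then 1 else 0)) ∧
      (r v ≠ 0 → x v ≤ if v = o then 1 else 0))

open Classical in
theorem lfvInv_heavy {V : Type} (r x x' : V → ℕ) (p q : V)
    (hx : ∀ v, x' v = x v + (if v = p then 1 else 0) + (if v = q then 1 else 0))
    (hp : r p = 0) (h : lfvInv r x p) : lfvInv r x' q := by
  rcases h with ⟨_, h⟩ | ⟨o, _, h, _⟩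
  swap
  · exact absurd hp h
  by_cases hq : r q = 0
  · refine Or.inl ⟨hq, fun v => ⟨(h v).1, fun hv => ?_⟩⟩
    have h1 : v ≠ p := by rintro rfl; exact hv hp
    have h2 : v ≠ q := by rintro rfl; exact hv hq
    rw [hx, (h v).2 hv]; simp [h1, h2]
  · refine Or.inr ⟨q, hq, hq, fun v => ⟨?_, fun hv => ?_⟩⟩
    · rw [add_assoc]; exact (h v).1.add ⟨_, rfl⟩
    · have h1 : v ≠ p := by rintro rfl; exact hv hp
      rw [hx, (h v).2 hv]; simp [h1]

open Classical in
theorem lfvInv_light {V : Type} (r r' x : V → ℕ) (p q : V)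
    (hr : ∀ v, r v = r' v + (if v = p then 1 else 0) + (if v = q then 1 else 0))
    (hp : r p ≠ 0) (h : lfvInv r x p) : lfvInv r' x q := by
  rcases h with ⟨h, _⟩ | ⟨o, ho, _, h⟩
  · exact absurd h hp
  have hpar : ∀ v, Even (r' v + (if v = o then 1 else 0) + (if v = q then 1 else 0)) := by
    intro v
    have h1 := (h v).1
    rw [hr] at h1
    have e1 : r' v + (if v = p then 1 else 0) + (if v = q then 1 else 0)
      + (if v = o then 1 else 0) + (if v = p then 1 else 0)
      = (r' v + (if v = o then 1 else 0) + (if v = q then 1 else 0))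
        + ((if v = p then 1 else 0) + (if v = p then 1 else 0)) := by ring
    rw [e1, Nat.even_add] at h1
    exact h1.2 ⟨_, rfl⟩
  have hne : ∀ v, r' v ≠ 0 → r v ≠ 0 := by
    intro v hv; rw [hr]; omega
  by_cases hq : r' q = 0
  · have hqo : q = o := by
      by_contra hqo
      have := hpar q
      simp [hq, hqo] at this
    subst hqo
    refine Or.inl ⟨hq, fun v => ⟨?_, fun hv => ?_⟩⟩
    · have := hpar v
      rw [add_assoc, Nat.even_add] at this
      exact this.2 ⟨_, rfl⟩
    · have h1 : v ≠ q := by rintro rfl; exact hv hq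
      have := (h v).2 (hne v hv)
      simpa [h1] using this
  · refine Or.inr ⟨o, ?_, hq, fun v => ⟨hpar v, fun hv => (h v).2 (hne v hv)⟩⟩
    by_cases hqo : o = q
    · rwa [hqo]
    · intro h0
      have := hpar o
      simp [h0, hqo] at this

theorem lfvInv_all {V : Type} [Fintype V] (G : SimpleGraph V) (w : ℕ → V)
    (hw : ∀ t, G.Adj (w t) (w (t + 1)))
    (hl : ∀ t u, G.Adj (w t) u → lfvCnt w t s(w t, w (t + 1)) ≤ lfvCnt w t s(w t, u))
    (K : ℕ) (hK : Even K) (t : ℕ) :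
    lfvInv (lfvSum G (fun e => K - lfvCnt w t e)) (lfvSum G (fun e => lfvCnt w t e - K)) (w t) := by
  classical
  induction t with
  | zero =>
    have hx : ∀ v, lfvSum G (fun e => lfvCnt w 0 e - K) v = 0 := by
      intro v; simp [lfvSum, lfvCnt]
    have hr : ∀ v, Even (lfvSum G (fun e => K - lfvCnt w 0 e) v) := by
      intro v
      unfold lfvSum
      refine Finset.even_sum _ (fun u _ => ?_)
      split_ifs
      · simpa [lfvCnt] using hK
      · simp
    by_cases h0 : lfvSum G (fun e => K - lfvCnt w 0 e) (w 0) = 0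
    · exact Or.inl ⟨h0, fun v => ⟨hr v, fun _ => hx v⟩⟩
    · refine Or.inr ⟨w 0, h0, h0, fun v => ⟨?_, fun _ => ?_⟩⟩
      · rw [add_assoc]; exact (hr v).add ⟨_, rfl⟩
      · rw [hx]; exact Nat.zero_le _
  | succ t ih =>
    by_cases hK' : lfvCnt w t s(w t, w (t + 1)) < K
    · have hx : (lfvSum G (fun e => lfvCnt w (t + 1) e - K))
          = (lfvSum G (fun e => lfvCnt w t e - K)) := by
        funext v
        refine lfvSum_congr _ _ _ (fun e => ?_) v
        rw [lfvCnt]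
        split_ifs with h
        · subst h; omega
        · omega
      rw [hx]
      refine lfvInv_light _ _ _ (w t) _ (lfvSum_update G _ _ _ _ (hw t) ?_) ?_ ih
      · intro e
        simp only [lfvCnt]
        split_ifs with h
        · subst h; omega
        · omega
      · rw [lfvSum_ne_zero]
        exact ⟨_, hw t, by omega⟩
    · have hr : (lfvSum G (fun e => K - lfvCnt w (t + 1) e))
          = (lfvSum G (fun e => K - lfvCnt w t e)) := by
        funext v
        refine lfvSum_congr _ _ _ (fun e => ?_) v
        rw [lfvCnt]
        split_ifs with h
        · subst h; omega
        · omega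
      rw [hr]
      refine lfvInv_heavy _ _ _ (w t) _ (lfvSum_update G _ _ _ _ (hw t) ?_) ?_ ih
      · intro e
        simp only [lfvCnt]
        split_ifs with h
        · subst h; omega
        · omega
      · by_contra hc
        obtain ⟨u, hu, h2⟩ := (lfvSum_ne_zero _ _ _).1 hc
        have := hl t u hu
        omega

theorem lfv_adj {V : Type} [Fintype V] (G : SimpleGraph V) (w : ℕ → V)
    (hw : ∀ t, G.Adj (w t) (w (t + 1)))
    (hl : ∀ t u, G.Adj (w t) u → lfvCnt w t s(w t, w (t + 1)) ≤ lfvCnt w t s(w t, u))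
    (t : ℕ) (v x y : V) (hx : G.Adj v x) (hy : G.Adj v y) :
    lfvCnt w t s(v, y) ≤ lfvCnt w t s(v, x) + 3 := by
  obtain ⟨K, hK, h1, h2⟩ : ∃ K, Even K ∧ lfvCnt w t s(v, x) < K ∧ K ≤ lfvCnt w t s(v, x) + 2 := by
    rcases Nat.even_or_odd (lfvCnt w t s(v, x)) with h | h
    · exact ⟨_, h.add even_two, by omega, le_rfl⟩
    · exact ⟨lfvCnt w t s(v, x) + 1, h.add_one, by omega, by omega⟩
  have hv : lfvSum G (fun e => K - lfvCnt w t e) v ≠ 0 :=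
    (lfvSum_ne_zero _ _ _).2 ⟨x, hx, by omega⟩
  have hle := le_lfvSum G (fun e => lfvCnt w t e - K) v y hy
  have hx1 : lfvSum G (fun e => lfvCnt w t e - K) v ≤ 1 := by
    rcases lfvInv_all G w hw hl K hK t with ⟨_, h⟩ | ⟨o, _, _, h⟩
    · rw [(h v).2 hv]; omega
    · have := (h v).2 hv
      split_ifs at this <;> omega
  omega

theorem lfv_walk {V : Type} (G : SimpleGraph V) (f : Sym2 V → ℕ)
    (h : ∀ v x y, G.Adj v x → G.Adj v y → f s(v, y) ≤ f s(v, x) + 3)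
    {u v : V} (p : G.Walk u v) : ∀ x y, G.Adj u x → G.Adj v y →
      f s(v, y) ≤ f s(u, x) + 3 * (p.length + 1) := by
  induction p with
  | nil => intro x y hx hy; simpa using h _ x y hx hy
  | @cons a b c hab p ih =>
    intro x y hx hy
    have h1 := h a x b hx hab
    have h2 := ih a y hab.symm hy
    rw [Sym2.eq_swap] at h1
    rw [SimpleGraph.Walk.length_cons]
    omega

theorem lfvCnt_sum {V : Type} (w : ℕ → V) (S : Finset (Sym2 V))
    (hw : ∀ t, s(w t, w (t + 1)) ∈ S) (t : ℕ) : ∑ e ∈ S, lfvCnt w t e = t := by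
  classical
  induction t with
  | zero => simp [lfvCnt]
  | succ t ih =>
    simp only [lfvCnt]
    rw [Finset.sum_add_distrib, ih, Finset.sum_ite_eq]
    simp [hw t]

theorem lfvCnt_const {V : Type} (w : ℕ → V) (e : Sym2 V) (t n : ℕ)
    (h : ∀ t', t ≤ t' → t' < t + n → s(w t', w (t' + 1)) ≠ e) :
    lfvCnt w (t + n) e = lfvCnt w t e := by
  induction n with
  | zero => rfl
  | succ n ih =>
    rw [← add_assoc, lfvCnt, ih (fun t' h1 h2 => h t' h1 (by omega)),
      if_neg (h (t + n) (by omega) (by omega))]; rfl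


/-- There is a universal constant `C > 0` such that for every finite connected simple
graph `G` with `m ≥ 1` edges and diameter `d ≥ 1` and every walk `w` on `G` following the
LFV-e policy, every edge of `G` is traversed in every time window of length `C * m * d`. -/
theorem lfv_e_edge_latency :
    ∃ C : ℝ, 0 < C ∧
      ∀ (V : Type) [Fintype V] (G : SimpleGraph V), G.Connected →
        ∀ m : ℕ, m = G.edgeSet.ncard → 1 ≤ m →
        -- `d` is the diameter of `G`
        ∀ d : ℕ, IsGreatest {k : ℕ | ∃ u v : V, G.dist u v = k} d → 1 ≤ d →
        ∀ w : ℕ → V,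
          -- `w` is a walk on `G`
          (∀ t : ℕ, G.Adj (w t) (w (t + 1))) →
          -- `w` follows the LFV-e policy
          (∀ t : ℕ, ∀ u : V, G.Adj (w t) u →
            {t' : ℕ | t' < t ∧ s(w t', w (t' + 1)) = s(w t, w (t + 1))}.ncard ≤
              {t' : ℕ | t' < t ∧ s(w t', w (t' + 1)) = s(w t, u)}.ncard) →
          ∀ a b : V, G.Adj a b → ∀ t : ℕ,
            ∃ t' : ℕ, t ≤ t' ∧ (t' : ℝ) < (t : ℝ) + C * m * d ∧
              s(w t', w (t' + 1)) = s(a, b) := by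

  classical
  refine ⟨13, by norm_num, ?_⟩
  intro V _ G hG m hm hm1 d hd hd1 w hw hl a b hab t
  simp only [lfvCnt_eq] at hl
  by_contra hcon
  push Not at hcon
  have hno : ∀ t', t ≤ t' → t' < t + 13 * m * d → s(w t', w (t' + 1)) ≠ s(a, b) := by
    intro t' h1 h2
    refine hcon t' h1 ?_
    exact_mod_cast h2
  have hc := lfvCnt_const w s(a, b) t (13 * m * d) hno
  set c := lfvCnt w t s(a, b) with hcdef
  have hcard : G.edgeFinset.card = m := by
    rw [hm, Set.ncard_eq_toFinset_card', SimpleGraph.edgeFinset]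
  have hmem : ∀ t, s(w t, w (t + 1)) ∈ G.edgeFinset := by
    intro t; simpa using hw t
  have hbd : ∀ T x y u v, G.Adj u x → G.Adj v y →
      lfvCnt w T s(v, y) ≤ lfvCnt w T s(u, x) + 6 * d := by
    intro T x y u v hx hy
    obtain ⟨p, hp⟩ := hG.exists_walk_length_eq_dist u v
    have h1 := lfv_walk G (lfvCnt w T) (fun v x y => lfv_adj G w hw hl T v x y) p x y hx hy
    have h2 : G.dist u v ≤ d := hd.2 ⟨u, v, rfl⟩
    omega
  have hup : t + 13 * m * d ≤ m * (c + 6 * d) := by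
    rw [← lfvCnt_sum w G.edgeFinset hmem (t + 13 * m * d), ← hcard, ← smul_eq_mul (G.edgeFinset.card)]
    refine Finset.sum_le_card_nsmul _ _ _ (fun e he => ?_)
    induction e using Sym2.ind with
    | _ v y =>
      rw [hcard, ← hc]
      exact hbd _ _ _ _ _ hab (by simpa using he)
  have hlow : m * c ≤ t + m * (6 * d) := by
    have h1 : ∑ e ∈ G.edgeFinset, c ≤ ∑ e ∈ G.edgeFinset, (lfvCnt w t e + 6 * d) := by
      refine Finset.sum_le_sum (fun e he => ?_)
      induction e using Sym2.ind with
      | _ v y => exact hbd _ _ _ _ _ (by simpa using he) hab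
    rw [Finset.sum_add_distrib, lfvCnt_sum w _ hmem] at h1
    simpa [hcard] using h1
  have : 1 ≤ m * d := Nat.mul_pos hm1 hd1
  nlinarith
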